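/- arXiv:2504.14674 — 2 statements merged into one kernel-verified Lean document; each statement's English description precedes it below -/
import Mathlib

section
/- Let m ≥ 5 be odd and let f₄(x) = x + x^3 + x^{2^m − 2^{(m+3)/2} + 2}. For the binary sequence s_t = Tr(f₄(α^t + 1)), the linear span is L_s = 1 + m(2^{(m−3)/2} + 1) if m ≡ 1 (mod 4), and L_s = 1 + m(2^{(m−3)/2} − 1) if m ≡ 3 (mod 4). -/
open Polynomial
open scoped Classical

/-- The polynomial S(x) = ∑_{t=0}^{v−1} s_t x^t ∈ 𝔽₂[x], where
    s_t = Tr(f(α^t + 1)) and v = 2^m − 1. -/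
noncomputable def traceSeqPoly (m : ℕ) (α : GaloisField 2 m)
    (f : GaloisField 2 m → GaloisField 2 m) : Polynomial (ZMod 2) :=
  ∑ t ∈ Finset.range (2 ^ m - 1),
    C (Algebra.trace (ZMod 2) (GaloisField 2 m) (f (α ^ t + 1))) * X ^ t

/-- The minimal polynomial of the sequence:
    g_s(x) = (x^v − 1)/gcd(x^v − 1, S(x)). Its degree is the linear span L_s. -/
noncomputable def genPoly (m : ℕ) (α : GaloisField 2 m)
    (f : GaloisField 2 m → GaloisField 2 m) : Polynomial (ZMod 2) :=
  (X ^ (2 ^ m - 1) - 1) /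
    EuclideanDomain.gcd (X ^ (2 ^ m - 1) - 1) (traceSeqPoly m α f)

/-- The binary cyclic code C_s = {c ∈ 𝔽₂[x] : deg c < v and g_s ∣ c},
    as an 𝔽₂-submodule of 𝔽₂[x]. -/
noncomputable def codeC (m : ℕ) (α : GaloisField 2 m)
    (f : GaloisField 2 m → GaloisField 2 m) :
    Submodule (ZMod 2) (Polynomial (ZMod 2)) :=
  Polynomial.degreeLT (ZMod 2) (2 ^ m - 1) ⊓
    (Ideal.span {genPoly m α f}).restrictScalars (ZMod 2)

/-- The set of Hamming weights (numbers of nonzero coefficients) of the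
    nonzero codewords of a code; the minimum distance is its least element. -/
def wtSet (Cs : Submodule (ZMod 2) (Polynomial (ZMod 2))) : Set ℕ :=
  {w | ∃ c : Polynomial (ZMod 2), c ∈ Cs ∧ c ≠ 0 ∧ c.support.card = w}

/-!
By Blahut's theorem, if `s_t = P(α ^ t)` with `deg P < 2 ^ m - 1`, then the linear span of `s` is
the number of nonzero coefficients of `P`. So one writes `Tr (f₄ (x + 1))` as a sum of absolute
traces `Tr (x ^ b)` with `b` in pairwise distinct full cyclotomic cosets; each contributes `m`
monomials.

Write `m = 2 * k + 5`. Raising the last monomial of `f₄` to the power `2 ^ (k + 1)` does not change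
its trace and turns it into `y ^ (2 ^ (k + 1) - 1) * y ^ 2 ^ (k + 2)` at `y = x + 1`. In
characteristic two this is the sum of `x ^ a` and `x ^ (a + 2 ^ (k + 2))` over `a < 2 ^ (k + 1)`.
Since `Tr (x ^ (2 * n)) = Tr (x ^ n)`, every exponent can be replaced by its odd part, and the odd
numbers that occur an odd number of times can be listed by recursion on `k`. They are all smaller
than `2 ^ ((m + 1) / 2)`, which puts them in distinct full cosets.
-/

section Blahut

variable {K F : Type*} [Field K] [DecidableEq K] [Field F] [Algebra K F]

theorem aeval_div_gcd_eq_zero_iff {p : K[X]} (hp : p.Separable) (q : K[X]) (β : F) :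
    aeval β (p / EuclideanDomain.gcd p q) = 0 ↔ aeval β p = 0 ∧ aeval β q ≠ 0 := by
  set g := EuclideanDomain.gcd p q
  have hgcd : aeval β g = 0 ↔ aeval β p = 0 ∧ aeval β q = 0 := root_gcd_iff_root_left_right
  have hfac : g * (p / g) = p :=
    EuclideanDomain.mul_div_cancel' (mt EuclideanDomain.gcd_eq_zero_iff.1 (by simp [hp.ne_zero]))
      (EuclideanDomain.gcd_dvd_left p q)
  have hcop : IsCoprime (aeval β g) (aeval β (p / g)) :=
    (Separable.isCoprime (hfac.symm ▸ hp)).map (aeval β : K[X] →ₐ[K] F).toRingHom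
  have hp_eval : aeval β p = aeval β g * aeval β (p / g) := by rw [← map_mul, hfac]
  constructor
  · intro hβ
    have hpβ : aeval β p = 0 := by rw [hp_eval, hβ, mul_zero]
    exact ⟨hpβ, fun hqβ => not_isCoprime_zero_zero (hgcd.2 ⟨hpβ, hqβ⟩ ▸ hβ ▸ hcop)⟩
  · rintro ⟨hpβ, hqβ⟩
    exact (mul_eq_zero.1 (hp_eval ▸ hpβ)).resolve_left fun hgβ => hqβ (hgcd.1 hgβ).2

theorem natDegree_div_gcd_eq_card_filter_aroots {p : K[X]} (hp : p.Separable)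
    (hsplit : (p.map (algebraMap K F)).Splits) (q : K[X]) :
    (p / EuclideanDomain.gcd p q).natDegree =
      ((p.aroots F).toFinset.filter fun β => aeval β q ≠ 0).card := by
  set r := p / EuclideanDomain.gcd p q
  have hrp : r ∣ p := EuclideanDomain.div_dvd_of_dvd (EuclideanDomain.gcd_dvd_left p q)
  have hr : r.Separable := hp.of_dvd hrp
  have hrsplit : (r.map (algebraMap K F)).Splits :=
    hsplit.of_dvd hp.map.ne_zero (Polynomial.map_dvd _ hrp)
  rw [← natDegree_map (p := r) (algebraMap K F), hrsplit.natDegree_eq_card_roots,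
    ← Multiset.toFinset_card_of_nodup (nodup_roots hr.map)]
  congr 1
  ext β
  rw [Multiset.mem_toFinset, mem_aroots, aeval_div_gcd_eq_zero_iff hp, Finset.mem_filter,
    Multiset.mem_toFinset, mem_aroots]
  simp only [ne_eq, hr.ne_zero, hp.ne_zero, not_false_eq_true, true_and]

theorem sum_pow_mul_inv_pow {ζ : F} {v i j : ℕ} (hζ : IsPrimitiveRoot ζ v)
    (hi : i < v) (hj : j < v) :
    ∑ t ∈ Finset.range v, (ζ ^ j * (ζ ^ i)⁻¹) ^ t = if j = i then (v : F) else 0 := by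
  have hζi : ζ ^ i ≠ 0 := pow_ne_zero i (hζ.ne_zero (by omega))
  split_ifs with hij
  · simp [hij, mul_inv_cancel₀ hζi]
  · have hne : ζ ^ j * (ζ ^ i)⁻¹ ≠ 1 := fun h =>
      hij (hζ.pow_inj hj hi ((mul_inv_eq_one₀ hζi).1 h))
    have hpow : (ζ ^ j * (ζ ^ i)⁻¹) ^ v = 1 := by
      rw [mul_pow, inv_pow, pow_right_comm, pow_right_comm ζ i, hζ.pow_eq_one, one_pow, one_pow,
        inv_one, mul_one]
    rw [geom_sum_eq hne, hpow, sub_self, zero_div]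

theorem sum_eval_pow_mul_inv_pow {ζ : F} {v i : ℕ} (hζ : IsPrimitiveRoot ζ v) (hi : i < v)
    {P : F[X]} (hP : P.natDegree < v) :
    ∑ t ∈ Finset.range v, P.eval (ζ ^ t) * (ζ ^ i)⁻¹ ^ t = v * P.coeff i := by
  calc ∑ t ∈ Finset.range v, P.eval (ζ ^ t) * (ζ ^ i)⁻¹ ^ t
      = ∑ t ∈ Finset.range v, ∑ j ∈ Finset.range v,
          P.coeff j * (ζ ^ j * (ζ ^ i)⁻¹) ^ t := by
        refine Finset.sum_congr rfl fun t _ => ?_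
        rw [eval_eq_sum_range' hP, Finset.sum_mul]
        refine Finset.sum_congr rfl fun j _ => ?_
        rw [mul_pow, pow_right_comm ζ t, mul_assoc]
    _ = ∑ j ∈ Finset.range v, P.coeff j * if j = i then (v : F) else 0 := by
        rw [Finset.sum_comm]
        refine Finset.sum_congr rfl fun j hj => ?_
        rw [← Finset.mul_sum, sum_pow_mul_inv_pow hζ hi (Finset.mem_range.1 hj)]
    _ = v * P.coeff i := by
        simp [hi, mul_comm]

theorem natDegree_X_pow_sub_one_div_gcd_eq_card_support {ζ : F} {v : ℕ} (hζ : IsPrimitiveRoot ζ v)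
    {s : ℕ → K} {P : F[X]} (hP : P.natDegree < v)
    (hs : ∀ t < v, algebraMap K F (s t) = P.eval (ζ ^ t)) :
    ((X ^ v - 1) / EuclideanDomain.gcd (X ^ v - 1)
      (∑ t ∈ Finset.range v, C (s t) * X ^ t)).natDegree = P.support.card := by
  set S : K[X] := ∑ t ∈ Finset.range v, C (s t) * X ^ t
  have : NeZero v := ⟨by omega⟩
  have hvF : (v : F) ≠ 0 := hζ.neZero'.out
  have hsep : (X ^ v - 1 : K[X]).Separable := by
    refine X_pow_sub_one_separable_iff.2 fun h => hvF ?_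
    rw [← map_natCast (algebraMap K F), h, map_zero]
  have hsplit : ((X ^ v - 1 : K[X]).map (algebraMap K F)).Splits := by
    simpa using X_pow_sub_one_splits hζ
  have hS : ∀ i < v, aeval (ζ ^ i)⁻¹ S = v * P.coeff i := by
    intro i hi
    rw [← sum_eval_pow_mul_inv_pow hζ hi hP, map_sum]
    refine Finset.sum_congr rfl fun t ht => ?_
    rw [map_mul, aeval_C, hs t (Finset.mem_range.1 ht), map_pow, aeval_X]
  have hlt : ∀ i ∈ P.support, i < v := fun i hi => (le_natDegree_of_mem_supp i hi).trans_lt hP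
  have hpow : ∀ i, (ζ ^ i)⁻¹ ^ v = 1 := fun i => by
    rw [inv_pow, pow_right_comm, hζ.pow_eq_one, one_pow, inv_one]
  have hmem : ∀ β : F, β ∈ (((X ^ v - 1 : K[X]).aroots F).toFinset.filter fun β => aeval β S ≠ 0) ↔
      β ^ v = 1 ∧ aeval β S ≠ 0 := fun β => by
    rw [Finset.mem_filter, Multiset.mem_toFinset, mem_aroots, map_sub, map_pow, aeval_X, map_one,
      sub_eq_zero, and_iff_right hsep.ne_zero]
  rw [natDegree_div_gcd_eq_card_filter_aroots hsep hsplit, eq_comm]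
  refine Finset.card_bij (fun i _ => (ζ ^ i)⁻¹) (fun i hi => ?_) (fun i hi j hj hij => ?_)
    fun β hβ => ?_
  · rw [hmem, hS i (hlt i hi)]
    exact ⟨hpow i, mul_ne_zero hvF (mem_support_iff.1 hi)⟩
  · exact hζ.pow_inj (hlt i hi) (hlt j hj) (inv_injective hij)
  · obtain ⟨hβv, hβS⟩ := (hmem β).1 hβ
    obtain ⟨i, hi, hiβ⟩ := hζ.eq_pow_of_pow_eq_one (ξ := β⁻¹) (by rw [inv_pow, hβv, inv_one])
    obtain rfl : (ζ ^ i)⁻¹ = β := by rw [hiβ, inv_inv]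
    rw [hS i hi] at hβS
    exact ⟨i, mem_support_iff.2 (right_ne_zero_of_mul hβS), rfl⟩

end Blahut

section CyclotomicCosets

variable {q m n : ℕ}

theorem lt_pow_sub_one_of_lt_pow (hq : 1 < q) (hnm : n < m) {b : ℕ} (hb : b < q ^ n) :
    b < q ^ m - 1 := by
  have : 2 * q ^ n ≤ q ^ m := calc
    2 * q ^ n ≤ q * q ^ n := Nat.mul_le_mul_right _ hq
    _ = q ^ (n + 1) := (pow_succ' q n).symm
    _ ≤ q ^ m := Nat.pow_le_pow_right (by omega) hnm
  omega

theorem pow_sub_one_coprime_pow (hq : 1 < q) (hm : m ≠ 0) (i : ℕ) :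
    (q ^ m - 1).Coprime (q ^ i) := by
  refine Nat.Coprime.pow_right i (Nat.Coprime.of_dvd_right (dvd_pow_self q hm) ?_)
  rw [Nat.coprime_self_sub_left (Nat.one_le_pow _ _ (by omega))]
  exact Nat.coprime_one_left _

/-- A residue with base-`q` expansion of length `n` keeps it without wrap-around when shifted by at
most `m - n` digits. -/
theorem eq_zero_of_modEq_mul_pow (hq : 1 < q) (hnm : n < m) {b c d : ℕ} (hqb : ¬q ∣ b)
    (hb : b < q ^ n) (hc : c < q ^ n) (hd : d + n ≤ m) (h : b ≡ c * q ^ d [MOD q ^ m - 1]) :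
    d = 0 := by
  have hbv : b < q ^ m - 1 := lt_pow_sub_one_of_lt_pow hq hnm hb
  have hcd : c * q ^ d < q ^ m := calc
    c * q ^ d < q ^ n * q ^ d := Nat.mul_lt_mul_of_pos_right hc (by positivity)
    _ = q ^ (d + n) := by rw [mul_comm, pow_add]
    _ ≤ q ^ m := Nat.pow_le_pow_right (by omega) hd
  by_contra hd0
  rw [Nat.ModEq, Nat.mod_eq_of_lt hbv] at h
  rcases (Nat.le_sub_one_of_lt hcd).lt_or_eq with hlt | heq
  · rw [Nat.mod_eq_of_lt hlt] at h
    exact hqb (h ▸ (dvd_pow_self q hd0).mul_left c)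
  · rw [heq, Nat.mod_self] at h
    exact hqb (h ▸ dvd_zero q)

theorem eq_and_eq_of_mul_pow_modEq (hq : 1 < q) (hnm : n < m) (hmn : 2 * n ≤ m + 1)
    {b c i j : ℕ} (hqb : ¬q ∣ b) (hqc : ¬q ∣ c) (hb : b < q ^ n) (hc : c < q ^ n)
    (hi : i < m) (hj : j < m) (h : b * q ^ i ≡ c * q ^ j [MOD q ^ m - 1]) : b = c ∧ i = j := by
  wlog hij : i ≤ j generalizing b c i j
  · exact (this hqc hqb hc hb hj hi h.symm (le_of_not_ge hij)).imp Eq.symm Eq.symm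
  obtain ⟨d, rfl⟩ := Nat.exists_eq_add_of_le hij
  have hbc : b ≡ c * q ^ d [MOD q ^ m - 1] := by
    refine Nat.ModEq.cancel_right_of_coprime (pow_sub_one_coprime_pow hq (by omega) i) ?_
    rwa [mul_assoc, ← pow_add, add_comm d]
  have hcb : c ≡ b * q ^ (m - d) [MOD q ^ m - 1] := by
    have hqm : q ^ d * q ^ (m - d) ≡ 1 [MOD q ^ m - 1] := by
      rw [← pow_add, Nat.add_sub_cancel' (by omega)]
      exact Nat.modEq_sub (Nat.one_le_pow _ _ (by omega))
    have := (hbc.mul_right (q ^ (m - d))).trans (mul_assoc c _ _ ▸ hqm.mul_left c)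
    exact (mul_one c ▸ this).symm
  have hd : d = 0 := by
    rcases le_or_gt (d + n) m with hdn | hdn
    · exact eq_zero_of_modEq_mul_pow hq hnm hqb hb hc hdn hbc
    · have := eq_zero_of_modEq_mul_pow hq hnm hqc hc hb (by omega) hcb
      omega
  subst hd
  rw [pow_zero, mul_one] at hbc
  exact ⟨hbc.eq_of_lt_of_lt (lt_pow_sub_one_of_lt_pow hq hnm hb)
    (lt_pow_sub_one_of_lt_pow hq hnm hc), rfl⟩

/-- The union of the `q`-cyclotomic cosets modulo `q ^ m - 1` of the elements of `B`, each coset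
being listed by its residues `b * q ^ i` with `i < m`. -/
def cyclotomicCosets (q m : ℕ) (B : Finset ℕ) : Finset ℕ :=
  Finset.image₂ (fun b i => b * q ^ i % (q ^ m - 1)) B (Finset.range m)

variable {B : Finset ℕ}

theorem injOn_mul_pow_mod (hq : 1 < q) (hnm : n < m) (hmn : 2 * n ≤ m + 1)
    (hB : ∀ b ∈ B, ¬q ∣ b ∧ b < q ^ n) :
    Set.InjOn (fun x : ℕ × ℕ => x.1 * q ^ x.2 % (q ^ m - 1)) (B ×ˢ Finset.range m : Finset _) := by
  rintro ⟨b, i⟩ hbi ⟨c, j⟩ hcj h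
  obtain ⟨hb, hi⟩ := Finset.mem_product.1 hbi
  obtain ⟨hc, hj⟩ := Finset.mem_product.1 hcj
  exact Prod.ext_iff.2 (eq_and_eq_of_mul_pow_modEq hq hnm hmn (hB b hb).1 (hB c hc).1 (hB b hb).2
    (hB c hc).2 (Finset.mem_range.1 hi) (Finset.mem_range.1 hj) h)

theorem card_cyclotomicCosets (hq : 1 < q) (hnm : n < m) (hmn : 2 * n ≤ m + 1)
    (hB : ∀ b ∈ B, ¬q ∣ b ∧ b < q ^ n) : (cyclotomicCosets q m B).card = m * B.card := by
  rw [cyclotomicCosets, Finset.card_image₂_iff.2, Finset.card_range, mul_comm]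
  simpa using injOn_mul_pow_mod hq hnm hmn hB

theorem sum_pow_cyclotomicCosets {R : Type*} [CommSemiring R] (hq : 1 < q) (hnm : n < m)
    (hmn : 2 * n ≤ m + 1) (hB : ∀ b ∈ B, ¬q ∣ b ∧ b < q ^ n) {x : R} (hx : x ^ (q ^ m - 1) = 1) :
    ∑ j ∈ cyclotomicCosets q m B, x ^ j = ∑ b ∈ B, ∑ i ∈ Finset.range m, (x ^ b) ^ q ^ i := by
  rw [← Finset.sum_product', cyclotomicCosets, Finset.image₂]
  refine (Finset.sum_image (injOn_mul_pow_mod hq hnm hmn hB)).trans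
    (Finset.sum_congr rfl fun bi _ => ?_)
  rw [← pow_eq_pow_mod _ hx, pow_mul]

theorem zero_notMem_cyclotomicCosets (hq : 1 < q) (hnm : n < m)
    (hB : ∀ b ∈ B, ¬q ∣ b ∧ b < q ^ n) : 0 ∉ cyclotomicCosets q m B := by
  intro h
  obtain ⟨b, hb, i, -, hbi⟩ := Finset.mem_image₂.1 h
  obtain ⟨hqb, hbn⟩ := hB b hb
  have hdvd : q ^ m - 1 ∣ b :=
    (pow_sub_one_coprime_pow hq (by omega) i).dvd_of_dvd_mul_right (Nat.dvd_of_mod_eq_zero hbi)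
  have hb0 : b = 0 := Nat.eq_zero_of_dvd_of_lt hdvd (lt_pow_sub_one_of_lt_pow hq hnm hbn)
  exact hqb (hb0 ▸ dvd_zero q)

theorem lt_of_mem_cyclotomicCosets (hq : 1 < q) (hm : m ≠ 0) {j : ℕ}
    (hj : j ∈ cyclotomicCosets q m B) : j < q ^ m - 1 := by
  obtain ⟨b, -, i, -, rfl⟩ := Finset.mem_image₂.1 hj
  exact Nat.mod_lt _ (Nat.sub_pos_of_lt (Nat.one_lt_pow hm hq))

end CyclotomicCosets

section TraceSums

theorem support_sum_X_pow {R : Type*} [Semiring R] [Nontrivial R] (J : Finset ℕ) :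
    (∑ j ∈ J, (X : R[X]) ^ j).support = J := by
  ext i
  simp [finsetSum_coeff, coeff_X_pow]

variable {K F : Type*} [Field K] [Field F] [Finite F] [Algebra K F]

theorem trace_pow_card_pow (y : F) (n : ℕ) :
    Algebra.trace K F (y ^ Nat.card K ^ n) = Algebra.trace K F y := by
  have : Finite K := Finite.of_injective _ (FaithfulSMul.algebraMap_injective K F)
  have := Fintype.ofFinite K
  rw [Nat.card_eq_fintype_card]
  induction n with
  | zero => rw [pow_zero, pow_one]
  | succ n ih =>
    rw [pow_succ, pow_mul, ← ih]
    exact Algebra.trace_eq_of_algEquiv (FiniteField.frobeniusAlgEquivOfAlgebraic K F) _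

theorem natDegree_X_pow_sub_one_div_gcd_of_trace_sum [DecidableEq K] {α : F} {v n : ℕ}
    (hα : IsPrimitiveRoot α v) (hv : v = Nat.card K ^ Module.finrank K F - 1)
    (hn : n < Module.finrank K F) (hn2 : 2 * n ≤ Module.finrank K F + 1) {B : Finset ℕ}
    (hB : ∀ b ∈ B, ¬Nat.card K ∣ b ∧ b < Nat.card K ^ n) {s : ℕ → K}
    (hs : ∀ t, s t = 1 + ∑ b ∈ B, Algebra.trace K F ((α ^ t) ^ b)) :
    ((X ^ v - 1) / EuclideanDomain.gcd (X ^ v - 1)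
      (∑ t ∈ Finset.range v, C (s t) * X ^ t)).natDegree = 1 + Module.finrank K F * B.card := by
  have : Finite K := Finite.of_injective _ (FaithfulSMul.algebraMap_injective K F)
  have hq : 1 < Nat.card K := Finite.one_lt_card
  set q := Nat.card K
  set m := Module.finrank K F
  subst hv
  set J := cyclotomicCosets q m B
  have h0J : 0 ∉ J := zero_notMem_cyclotomicCosets hq hn hB
  have hsupp := support_sum_X_pow (R := F) (insert 0 J)
  set P : F[X] := ∑ j ∈ insert 0 J, X ^ j with hP
  have hdeg : P.natDegree < q ^ m - 1 := by
    have hP0 : P ≠ 0 := support_nonempty.1 (hsupp ▸ Finset.insert_nonempty 0 J)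
    have hmem := natDegree_mem_support_of_nonzero hP0
    rw [hsupp, Finset.mem_insert] at hmem
    rcases hmem with h | h
    · rw [h]
      exact Nat.sub_pos_of_lt (Nat.one_lt_pow (by omega) hq)
    · exact lt_of_mem_cyclotomicCosets hq (by omega) h
  rw [natDegree_X_pow_sub_one_div_gcd_eq_card_support hα hdeg, hsupp,
    Finset.card_insert_of_notMem h0J, card_cyclotomicCosets hq hn hn2 hB, add_comm]
  intro t _
  have ht : (α ^ t) ^ (q ^ m - 1) = 1 := by rw [pow_right_comm, hα.pow_eq_one, one_pow]
  simp only [hs, hP, map_add, map_one, map_sum, FiniteField.algebraMap_trace_eq_sum_pow,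
    Finset.sum_insert h0J, pow_zero, eval_add, eval_one, eval_finsetSum, eval_pow, eval_X]
  rw [sum_pow_cyclotomicCosets hq hn hn2 hB ht]

end TraceSums

section OddExponents

theorem sum_range_two_mul {M : Type*} [AddCommMonoid M] (g : ℕ → M) (n : ℕ) :
    ∑ a ∈ Finset.range (2 * n), g a
      = ∑ a ∈ Finset.range n, g (2 * a) + ∑ a ∈ Finset.range n, g (2 * a + 1) := by
  rw [← Finset.sum_add_distrib]
  induction n with
  | zero => simp
  | succ n ih =>
    rw [mul_add_one, Finset.sum_range_succ, Finset.sum_range_succ, ih, Finset.sum_range_succ,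
      add_assoc]

/-- The indices `c` of the odd numbers `2 * c + 1` in the lower half
`[2 ^ (k + 2), 3 * 2 ^ (k + 1))` of a dyadic block. -/
def lowerHalfIndices (k : ℕ) : Finset ℕ :=
  Finset.Ico (2 ^ (k + 1)) (3 * 2 ^ k)

/-- The indices `c` of the odd exponents `2 * c + 1` below `2 ^ (k + 2)` that survive, after
cancellation modulo two, in the trace expansion for `m = 2 * k + 5`. -/
def lowIndices : ℕ → Finset ℕ
  | 0 => Finset.range 2
  | k + 1 => (Finset.range (2 ^ (k + 1)) \ lowIndices k) ∪ lowerHalfIndices k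

/-- The indices `c` of all odd exponents `2 * c + 1` in the trace expansion for `m = 2 * k + 5`. -/
def oddExponentIndices (k : ℕ) : Finset ℕ :=
  lowIndices k ∪ lowerHalfIndices k

theorem card_lowerHalfIndices (k : ℕ) : (lowerHalfIndices k).card = 2 ^ k := by
  rw [lowerHalfIndices, Nat.card_Ico, pow_succ']
  omega

theorem disjoint_range_lowerHalfIndices (k : ℕ) :
    Disjoint (Finset.range (2 ^ (k + 1))) (lowerHalfIndices k) := by
  rw [Finset.range_eq_Ico]
  exact Finset.Ico_disjoint_Ico_consecutive _ _ _

theorem lowIndices_subset_range (k : ℕ) : lowIndices k ⊆ Finset.range (2 ^ (k + 1)) := by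
  cases k with
  | zero => exact subset_rfl
  | succ k =>
    intro c hc
    simp only [lowIndices, lowerHalfIndices, Finset.mem_union, Finset.mem_sdiff, Finset.mem_range,
      Finset.mem_Ico] at hc ⊢
    omega

theorem disjoint_range_sdiff_lowerHalfIndices (k : ℕ) :
    Disjoint (Finset.range (2 ^ (k + 1)) \ lowIndices k) (lowerHalfIndices k) :=
  (disjoint_range_lowerHalfIndices k).mono_left Finset.sdiff_subset

theorem disjoint_lowIndices_lowerHalfIndices (k : ℕ) :
    Disjoint (lowIndices k) (lowerHalfIndices k) :=
  (disjoint_range_lowerHalfIndices k).mono_left (lowIndices_subset_range k)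

theorem card_lowIndices (k : ℕ) : ((lowIndices k).card : ℤ) = 2 ^ k + (-1) ^ k := by
  induction k with
  | zero => simp [lowIndices]
  | succ k ih =>
    rw [lowIndices, Finset.card_union_of_disjoint (disjoint_range_sdiff_lowerHalfIndices k),
      card_lowerHalfIndices, Nat.cast_add,
      Finset.cast_card_sdiff (lowIndices_subset_range k), ih, Finset.card_range]
    push_cast
    ring

theorem card_oddExponentIndices (k : ℕ) :
    ((oddExponentIndices k).card : ℤ) = 2 ^ (k + 1) + (-1) ^ k := by
  rw [oddExponentIndices, Finset.card_union_of_disjoint (disjoint_lowIndices_lowerHalfIndices k),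
    card_lowerHalfIndices, Nat.cast_add, card_lowIndices]
  push_cast
  ring

theorem two_mul_add_one_lt_of_mem_oddExponentIndices {k c : ℕ} (hc : c ∈ oddExponentIndices k) :
    2 * c + 1 < 2 ^ (k + 3) := by
  have h8 : 2 ^ (k + 3) = 8 * 2 ^ k := by ring
  have : 0 < 2 ^ k := by positivity
  rcases Finset.mem_union.1 hc with hlow | hhigh
  · have := Finset.mem_range.1 (lowIndices_subset_range k hlow)
    omega
  · have := Finset.mem_Ico.1 hhigh
    omega

section Doubling

variable {M : Type*} {T : ℕ → M}

theorem sum_range_two_pow_succ [AddCommMonoid M] (hT : ∀ n, T (2 * n) = T n) (n : ℕ) :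
    ∑ a ∈ Finset.range (2 ^ (n + 1)), T a
      = ∑ a ∈ Finset.range (2 ^ n), T a + ∑ c ∈ Finset.range (2 ^ n), T (2 * c + 1) := by
  rw [pow_succ', sum_range_two_mul]
  simp only [hT]

theorem sum_range_two_pow_succ_shift [AddCommMonoid M] (hT : ∀ n, T (2 * n) = T n) (n : ℕ) :
    ∑ a ∈ Finset.range (2 ^ (n + 1)), T (a + 2 ^ (n + 2))
      = ∑ a ∈ Finset.range (2 ^ n), T (a + 2 ^ (n + 1))
        + ∑ c ∈ lowerHalfIndices n, T (2 * c + 1) := by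
  rw [pow_succ' 2 n, sum_range_two_mul, lowerHalfIndices, Finset.sum_Ico_eq_sum_range,
    show 3 * 2 ^ n - 2 ^ (n + 1) = 2 ^ n by rw [pow_succ']; omega]
  congr 1 <;> refine Finset.sum_congr rfl fun a _ => ?_
  · rw [← pow_succ', ← hT (a + 2 ^ (n + 1)), mul_add, ← pow_succ']
  · congr 1
    ring

theorem sum_oddExponentIndices [AddCommGroup M] [Module (ZMod 2) M]
    (hT : ∀ n, T (2 * n) = T n) (k : ℕ) :
    T 1 + T 3 + ∑ a ∈ Finset.range (2 ^ (k + 1)), (T a + T (a + 2 ^ (k + 2)))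
      = T 0 + ∑ c ∈ oddExponentIndices k, T (2 * c + 1) := by
  rw [Finset.sum_add_distrib, oddExponentIndices,
    Finset.sum_union (disjoint_lowIndices_lowerHalfIndices k)]
  induction k with
  | zero =>
    have hT4 : T 4 = T 1 := (hT 2).trans (hT 1)
    simp only [lowIndices, lowerHalfIndices, zero_add, pow_zero, pow_one, mul_zero, mul_one, hT4,
      Nat.reducePow, Nat.reduceMul, Nat.reduceAdd, Nat.Ico_succ_singleton, Finset.range_one,
      Finset.sum_range_succ, Finset.sum_singleton]
    linear_combination (norm := module) ZModModule.add_self (T 1)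
  | succ k ih =>
    have hlow : ∑ c ∈ lowIndices (k + 1), T (2 * c + 1)
        = ∑ c ∈ Finset.range (2 ^ (k + 1)) \ lowIndices k, T (2 * c + 1)
          + ∑ c ∈ lowerHalfIndices k, T (2 * c + 1) :=
      Finset.sum_union (disjoint_range_sdiff_lowerHalfIndices k)
    have hsdiff := Finset.sum_sdiff (f := fun c => T (2 * c + 1)) (lowIndices_subset_range k)
    rw [sum_range_two_pow_succ hT, sum_range_two_pow_succ_shift hT, hlow, ← hsdiff]
    linear_combination (norm := module)
      ih + ZModModule.add_self (∑ c ∈ lowIndices k, T (2 * c + 1))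

end Doubling

end OddExponents

section TraceExpansion

theorem sub_one_pow_char_pow_sub_one {R : Type*} [CommRing R] (p : ℕ) [Fact p.Prime] [CharP R p]
    (x : R) (n : ℕ) : (x - 1) ^ (p ^ n - 1) = ∑ a ∈ Finset.range (p ^ n), x ^ a := by
  have key : (X - 1 : (ZMod p)[X]) ^ (p ^ n - 1) = ∑ a ∈ Finset.range (p ^ n), X ^ a := by
    refine mul_right_cancel₀ (X_sub_C_ne_zero (1 : ZMod p)) ?_
    rw [C_1, geom_sum_mul, pow_sub_one_mul (pow_ne_zero n (NeZero.ne p)), sub_pow_char_pow, one_pow]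
  let := ZMod.algebra R p
  simpa using congrArg (aeval x) key

variable {F : Type*} [Field F] [Finite F] [Algebra (ZMod 2) F]

theorem trace_pow_two_mul (x : F) (n : ℕ) :
    Algebra.trace (ZMod 2) F (x ^ (2 * n)) = Algebra.trace (ZMod 2) F (x ^ n) := by
  simpa [← pow_mul, mul_comm] using trace_pow_card_pow (K := ZMod 2) (x ^ n) 1

theorem trace_add_one_pow_three (x : F) :
    Algebra.trace (ZMod 2) F ((x + 1) ^ 3)
      = Algebra.trace (ZMod 2) F (x ^ 3) + Algebra.trace (ZMod 2) F 1 := by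
  have : CharP F 2 := charP_of_injective_algebraMap' (ZMod 2) 2
  have hcube : (x + 1) ^ 3 = x ^ 3 + x ^ 2 + x + 1 := by
    linear_combination (x ^ 2 + x) * CharTwo.two_eq_zero (R := F)
  have hsq : Algebra.trace (ZMod 2) F (x ^ 2) = Algebra.trace (ZMod 2) F x := by
    simpa using trace_pow_two_mul x 1
  rw [hcube, map_add, map_add, map_add, hsq, CharTwo.add_cancel_right]

theorem trace_add_one_pow_f₄_exponent {k : ℕ} (hF : Module.finrank (ZMod 2) F = 2 * k + 5) (x : F) :
    Algebra.trace (ZMod 2) F ((x + 1) ^ (2 ^ (2 * k + 5) - 2 ^ (k + 4) + 2))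
      = ∑ a ∈ Finset.range (2 ^ (k + 1)), (Algebra.trace (ZMod 2) F (x ^ a)
          + Algebra.trace (ZMod 2) F (x ^ (a + 2 ^ (k + 2)))) := by
  have : CharP F 2 := charP_of_injective_algebraMap' (ZMod 2) 2
  have hexp : (2 ^ (2 * k + 5) - 2 ^ (k + 4) + 2) * 2 ^ (k + 1)
      = 2 ^ (2 * k + 5) * (2 ^ (k + 1) - 1) + 2 ^ (k + 2) := by
    have hle : 2 ^ (k + 4) ≤ 2 ^ (2 * k + 5) := Nat.pow_le_pow_right two_pos (by omega)
    zify [hle, Nat.one_le_two_pow (n := k + 1)]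
    ring
  have hcard : ∀ y : F, y ^ 2 ^ (2 * k + 5) = y := by
    have := Fintype.ofFinite F
    intro y
    rw [← hF, FiniteField.pow_finrank_eq_card, FiniteField.pow_card]
  have hpow : ((x + 1) ^ (2 ^ (2 * k + 5) - 2 ^ (k + 4) + 2)) ^ 2 ^ (k + 1)
      = ∑ a ∈ Finset.range (2 ^ (k + 1)), (x ^ a + x ^ (a + 2 ^ (k + 2))) := by
    rw [← pow_mul, hexp, pow_add, pow_mul, hcard, ← CharTwo.sub_eq_add x 1,
      sub_one_pow_char_pow_sub_one 2, sub_pow_char_pow, one_pow, CharTwo.sub_eq_add, mul_add_one,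
      Finset.sum_mul, add_comm, ← Finset.sum_add_distrib]
    simp only [pow_add]
  have htrace := trace_pow_card_pow (K := ZMod 2)
    ((x + 1) ^ (2 ^ (2 * k + 5) - 2 ^ (k + 4) + 2)) (k + 1)
  rw [Nat.card_zmod, hpow, map_sum] at htrace
  simpa only [map_add] using htrace.symm

theorem trace_f₄_add_one {k : ℕ} (hF : Module.finrank (ZMod 2) F = 2 * k + 5) (x : F) :
    Algebra.trace (ZMod 2) F
        ((x + 1) + (x + 1) ^ 3 + (x + 1) ^ (2 ^ (2 * k + 5) - 2 ^ (k + 4) + 2))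
      = 1 + ∑ b ∈ (oddExponentIndices k).image (2 * · + 1),
          Algebra.trace (ZMod 2) F (x ^ b) := by
  have htrace_one : Algebra.trace (ZMod 2) F 1 = 1 := by
    rw [← map_one (algebraMap (ZMod 2) F), Algebra.trace_algebraMap, hF, nsmul_one,
      ZMod.natCast_eq_one_iff_odd]
    exact ⟨k + 2, by ring⟩
  have hodd := sum_oddExponentIndices (T := fun n => Algebra.trace (ZMod 2) F (x ^ n))
    (trace_pow_two_mul x) k
  simp only [pow_one, pow_zero, htrace_one] at hodd
  rw [map_add, map_add, map_add, trace_add_one_pow_three, trace_add_one_pow_f₄_exponent hF,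
    Finset.sum_image (fun a _ b _ h => by simpa using h), htrace_one, ← hodd]
  linear_combination CharTwo.two_eq_zero (R := ZMod 2)

end TraceExpansion

theorem natDegree_genPoly_f₄ {k : ℕ} {α : GaloisField 2 (2 * k + 5)}
    (hα : orderOf α = 2 ^ (2 * k + 5) - 1)
    {f : GaloisField 2 (2 * k + 5) → GaloisField 2 (2 * k + 5)}
    (hf : ∀ x, f x = x + x ^ 3 + x ^ (2 ^ (2 * k + 5) - 2 ^ (k + 4) + 2)) :
    (genPoly (2 * k + 5) α f).natDegree = 1 + (2 * k + 5) * (oddExponentIndices k).card := by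
  have hrank : Module.finrank (ZMod 2) (GaloisField 2 (2 * k + 5)) = 2 * k + 5 :=
    GaloisField.finrank 2 (by omega)
  rw [genPoly, traceSeqPoly, natDegree_X_pow_sub_one_div_gcd_of_trace_sum (n := k + 3)
      (B := (oddExponentIndices k).image (2 * · + 1)) (hα ▸ IsPrimitiveRoot.orderOf α),
    hrank, Finset.card_image_of_injective _ fun a b h => by simpa using h]
  · rw [hrank, Nat.card_zmod]
  · omega
  · omega
  · simp only [Nat.card_zmod, Finset.forall_mem_image]
    exact fun c hc => ⟨by omega, two_mul_add_one_lt_of_mem_oddExponentIndices hc⟩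
  · intro t
    rw [hf, trace_f₄_add_one hrank]

/-- For f₄(x) = x + x^3 + x^{2^m − 2^{(m+3)/2} + 2} over 𝔽_{2^m}, m ≥ 5 odd,
the linear span of the sequence s_t = Tr(f₄(α^t+1)) is
L_s = 1 + m(2^{(m−3)/2} + 1) if m ≡ 1 (mod 4), and
L_s = 1 + m(2^{(m−3)/2} − 1) if m ≡ 3 (mod 4). -/
theorem stmt9 (m : ℕ) (hm5 : 5 ≤ m) (hmo : Odd m)
    (α : GaloisField 2 m) (hα : orderOf α = 2 ^ m - 1)
    (f : GaloisField 2 m → GaloisField 2 m)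
    (hf : ∀ x, f x = x + x ^ 3 + x ^ (2 ^ m - 2 ^ ((m + 3) / 2) + 2)) :
    (m % 4 = 1 →
      (genPoly m α f).natDegree = 1 + m * (2 ^ ((m - 3) / 2) + 1)) ∧
    (m % 4 = 3 →
      (genPoly m α f).natDegree = 1 + m * (2 ^ ((m - 3) / 2) - 1)) := by
  obtain ⟨k, rfl⟩ : ∃ k, m = 2 * k + 5 := by
    obtain ⟨r, rfl⟩ := hmo
    exact ⟨r - 2, by omega⟩
  have hcard := card_oddExponentIndices k
  rw [show (2 * k + 5 + 3) / 2 = k + 4 by omega] at hf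
  rw [natDegree_genPoly_f₄ hα hf, show (2 * k + 5 - 3) / 2 = k + 1 by omega]
  refine ⟨fun h => ?_, fun h => ?_⟩ <;> congr 2
  · rw [Even.neg_one_pow (by grind)] at hcard
    exact_mod_cast hcard
  · rw [Odd.neg_one_pow (by grind)] at hcard
    zify [Nat.one_le_two_pow (n := k + 1)]
    exact hcard
end

section
/- Let m ≥ 5 be odd and let f₄(x) = x + x^3 + x^{2^m − 2^{(m+3)/2} + 2}; let s_t = Tr(f₄(α^t + 1)). Then the binary cyclic code C_s has length 2^m − 1 and 𝔽₂-dimension 2^m − 1 − L_s, where L_s = 1 + m(2^{(m−3)/2} + 1) if m ≡ 1 (mod 4) and L_s = 1 + m(2^{(m−3)/2} − 1) if m ≡ 3 (mod 4); moreover, if m ≡ 1 (mod 4) then max{8, 2^{(m−5)/2} + 2} ≤ d(C_s) ≤ 1 + m(2^{(m−3)/2} + 1), and if m ≡ 3 (mod 4) (so m ≥ 7) then 2^{(m−5)/2} + 2 ≤ d(C_s) ≤ 1 + m(2^{(m−3)/2} − 1). -/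
open Polynomial
open scoped Classical

open scoped Finset

/-!
Write `m = 2 k + 5`. The trace is invariant under the Frobenius map, and raising `x + 1` to the
power `2 ^ m - 2 ^ (k + 4) + 2` becomes, after `k + 1` Frobenius steps, raising it to
`2 ^ (k + 2) + (2 ^ (k + 1) - 1)`, which expands in characteristic 2 as two blocks of `2 ^ (k + 1)`
consecutive powers of `x`. Halving even exponents writes the sequence as the sum of `1` and the
traces of `α ^ (t n)` over a set of `2 ^ (k + 1) + (-1) ^ k` odd exponents `n < 2 ^ (k + 3)`. Their
2-cyclotomic cosets modulo `2 ^ m - 1` are disjoint and of full size `m`, so the linear span is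
`1 + m (2 ^ (k + 1) + (-1) ^ k)`, and the zeros of the code are `1` and the `α ^ (-b)` for `b` in
these cosets.

A codeword of weight `w` is thus a set of `w` nonzero locators whose power sums vanish at `0` and
at all these exponents, which include the `2 ^ k` consecutive odd numbers starting at
`2 ^ (k + 2) + 1`. The BCH argument gives `2 ^ k < w`, and `w` is even. For `k = 0` and `k = 2` the
power sums of small index exclude `w < 8`. The upper bound on the distance is the weight of the
generator polynomial, which has even degree and even weight.
-/

section PowerSums

variable {K : Type*} [Field K] {s : Finset K}

theorem lt_card_of_sum_pow_eq_zero (hs : s.Nonempty) (h0 : 0 ∉ s) {b q w : ℕ}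
    (hq : Set.InjOn (· ^ q : K → K) s)
    (hz : ∀ i < w, ∑ x ∈ s, x ^ (b + q * i) = 0) : w < #s := by
  by_contra! hw
  let e := s.equivFin
  have hinj : Function.Injective fun j => (e.symm j : K) ^ q := fun i j hij =>
    e.symm.injective (Subtype.ext (hq (e.symm i).2 (e.symm j).2 hij))
  have hvanish := Matrix.eq_zero_of_forall_pow_sum_mul_pow_eq_zero hinj
    (v := fun j => (e.symm j : K) ^ b) fun i => by
      rw [← hz i (i.2.trans_le hw), ← s.sum_coe_sort, ← e.symm.sum_comp]
      simp only [pow_add, pow_mul]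
  obtain ⟨x, hx⟩ := hs
  have hxb := congrFun hvanish (e ⟨x, hx⟩)
  simp only [Equiv.symm_apply_apply, Pi.zero_apply] at hxb
  exact h0 (eq_zero_of_pow_eq_zero hxb ▸ hx)

theorem sum_coeff_mul_sum_pow_eq_zero {P : K[X]} (hP : ∀ x ∈ s, P.IsRoot x) (j : ℕ) :
    ∑ i ∈ Finset.range (P.natDegree + 1), P.coeff i * ∑ x ∈ s, x ^ (i + j) = 0 := by
  simp only [Finset.mul_sum]
  rw [Finset.sum_comm]
  refine Finset.sum_eq_zero fun x hx => ?_
  simp only [pow_add, ← mul_assoc]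
  rw [← Finset.sum_mul, ← eval_eq_sum_range, hP x hx, zero_mul]

variable [CharP K 2]

theorem sum_pow_two_mul_eq_zero {n : ℕ} (h : ∑ x ∈ s, x ^ n = 0) : ∑ x ∈ s, x ^ (2 * n) = 0 := by
  simp only [mul_comm 2, pow_mul]
  rw [← sum_pow_char 2, h, zero_pow two_ne_zero]

theorem even_card_of_sum_pow_zero_eq_zero (h : ∑ x ∈ s, x ^ 0 = 0) : Even #s := by
  simpa [CharP.cast_eq_zero_iff K 2, even_iff_two_dvd] using h

theorem eight_le_card_of_sum_pow_one_three_five (hs : s.Nonempty) (h0 : 0 ∉ s)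
    (hp0 : ∑ x ∈ s, x ^ 0 = 0) (hp1 : ∑ x ∈ s, x ^ 1 = 0) (hp3 : ∑ x ∈ s, x ^ 3 = 0)
    (hp5 : ∑ x ∈ s, x ^ 5 = 0) : 8 ≤ #s := by
  have hp2 := sum_pow_two_mul_eq_zero hp1
  have hp4 := sum_pow_two_mul_eq_zero hp2
  have hp6 := sum_pow_two_mul_eq_zero hp3
  refine lt_card_of_sum_pow_eq_zero hs h0 (b := 0) (q := 1) (w := 7) (by simp) fun i hi => ?_
  rw [zero_add, one_mul]
  interval_cases i <;> assumption

/- The locator polynomial `∑ cᵢ Tⁱ` of six elements gives `∑ cᵢ pᵢ = 0` and `∑ cᵢ pᵢ₊₅ = 0`.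
When `p₅` is the only nonzero power sum among those of index `< 10` or `= 11`, the first relation
forces `c₅ = 0`, and then the second forces `c₀ = 0`. -/
theorem card_ne_six_of_sum_pow (h0 : 0 ∉ s)
    (hp0 : ∑ x ∈ s, x ^ 0 = 0) (hp1 : ∑ x ∈ s, x ^ 1 = 0) (hp3 : ∑ x ∈ s, x ^ 3 = 0)
    (hp5 : ∑ x ∈ s, x ^ 5 ≠ 0) (hp7 : ∑ x ∈ s, x ^ 7 = 0) (hp9 : ∑ x ∈ s, x ^ 9 = 0)
    (hp11 : ∑ x ∈ s, x ^ 11 = 0) : #s ≠ 6 := by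
  intro hcard
  have hp2 := sum_pow_two_mul_eq_zero hp1
  have hp4 := sum_pow_two_mul_eq_zero hp2
  have hp6 := sum_pow_two_mul_eq_zero hp3
  have hp8 := sum_pow_two_mul_eq_zero hp4
  set P : K[X] := ∏ x ∈ s, (X - C x) with hP
  have hdeg : P.natDegree = 6 := by rw [hP, natDegree_finsetProd_X_sub_C_eq_card, hcard]
  have hroot : ∀ x ∈ s, P.IsRoot x := fun x hx => by
    rw [IsRoot, hP, eval_prod, Finset.prod_eq_zero hx (by simp)]
  have hc0 : P.coeff 0 ≠ 0 := by
    rw [coeff_zero_eq_eval_zero, hP, eval_prod, Finset.prod_ne_zero_iff]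
    intro x hx
    simpa using ne_of_mem_of_not_mem hx h0
  have hrec (j : ℕ) : ∑ i ∈ Finset.range 7, P.coeff i * ∑ x ∈ s, x ^ (i + j) = 0 := by
    simpa only [hdeg] using sum_coeff_mul_sum_pow_eq_zero hroot j
  have hc5 : P.coeff 5 = 0 := by
    simpa only [Finset.sum_range_succ, Finset.sum_range_zero, Nat.reduceAdd, hp0, hp1, hp2, hp3,
      hp4, hp6, mul_zero, zero_add, add_zero, mul_eq_zero, hp5, or_false] using hrec 0
  refine hc0 ?_
  simpa only [Finset.sum_range_succ, Finset.sum_range_zero, Nat.reduceAdd, hp6, hp7, hp8, hp9,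
    hp11, hc5, mul_zero, zero_mul, zero_add, add_zero, mul_eq_zero, hp5, or_false] using hrec 5

theorem eight_le_card_of_sum_pow_one_three_seven_nine_eleven (hs : s.Nonempty) (h0 : 0 ∉ s)
    (hp0 : ∑ x ∈ s, x ^ 0 = 0) (hp1 : ∑ x ∈ s, x ^ 1 = 0) (hp3 : ∑ x ∈ s, x ^ 3 = 0)
    (hp7 : ∑ x ∈ s, x ^ 7 = 0) (hp9 : ∑ x ∈ s, x ^ 9 = 0) (hp11 : ∑ x ∈ s, x ^ 11 = 0) :
    8 ≤ #s := by
  by_cases hp5 : ∑ x ∈ s, x ^ 5 = 0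
  · exact eight_le_card_of_sum_pow_one_three_five hs h0 hp0 hp1 hp3 hp5
  have hp2 := sum_pow_two_mul_eq_zero hp1
  have hp4 := sum_pow_two_mul_eq_zero hp2
  have hfive : 5 < #s := by
    refine lt_card_of_sum_pow_eq_zero hs h0 (b := 0) (q := 1) (by simp) fun i hi => ?_
    rw [zero_add, one_mul]
    interval_cases i <;> assumption
  have hsix := card_ne_six_of_sum_pow h0 hp0 hp1 hp3 hp5 hp7 hp9 hp11
  obtain ⟨r, hr⟩ := even_card_of_sum_pow_zero_eq_zero hp0
  lia

end PowerSums

section LinearSpan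

variable {F K : Type*} [Field F] [Field K] [Algebra F K]

theorem aeval_div_gcd_eq_zero_iff_s10 [DecidableEq F] {P : F[X]} (hP : P.Separable) (S : F[X])
    {x : K} (hx : aeval x P = 0) :
    aeval x (P / EuclideanDomain.gcd P S) = 0 ↔ aeval x S ≠ 0 := by
  set d := EuclideanDomain.gcd P S
  have hd : d ≠ 0 := fun h => hP.ne_zero (EuclideanDomain.gcd_eq_zero_iff.1 h).1
  have hmul : d * (P / d) = P :=
    EuclideanDomain.mul_div_cancel' hd (EuclideanDomain.gcd_dvd_left P S)
  have hcoprime : IsCoprime d (P / d) := (hmul.symm ▸ hP).isCoprime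
  have hgcd : aeval x d = 0 ↔ aeval x S = 0 :=
    (root_gcd_iff_root_left_right (ϕ := algebraMap F K) (g := S)).trans (and_iff_right hx)
  rw [ne_eq, ← hgcd]
  constructor
  · intro hquot hdx
    obtain ⟨a, b, hab⟩ := hcoprime
    simpa [hquot, hdx] using congrArg (aeval x) hab
  · rw [← hmul, map_mul] at hx
    exact (mul_eq_zero.1 hx).resolve_left

theorem separable_X_pow_sub_one_of_isPrimitiveRoot {v : ℕ} [NeZero v] {β : K}
    (hβ : IsPrimitiveRoot β v) : (X ^ v - 1 : F[X]).Separable := by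
  have := hβ.neZero'
  refine X_pow_sub_one_separable_iff.2 fun hv => NeZero.ne (v : K) ?_
  rw [← map_natCast (algebraMap F K), hv, map_zero]

theorem rootSet_X_pow_sub_one_div_gcd [DecidableEq F] {v : ℕ} [NeZero v] {β : K}
    (hβ : IsPrimitiveRoot β v) (S : F[X]) :
    ((X ^ v - 1) / EuclideanDomain.gcd (X ^ v - 1) S).rootSet K =
      (β ^ ·) '' {b | b < v ∧ aeval (β ^ b) S ≠ 0} := by
  have hsep := separable_X_pow_sub_one_of_isPrimitiveRoot (F := F) hβ
  have hdvd := EuclideanDomain.div_dvd_of_dvd (EuclideanDomain.gcd_dvd_left (X ^ v - 1) S)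
  ext x
  rw [mem_rootSet_of_ne (ne_zero_of_dvd_ne_zero hsep.ne_zero hdvd)]
  constructor
  · intro hx
    have hx' : aeval x (X ^ v - 1 : F[X]) = 0 := aeval_eq_zero_of_dvd_aeval_eq_zero hdvd hx
    obtain ⟨b, hb, rfl⟩ := hβ.eq_pow_of_pow_eq_one (by simpa [sub_eq_zero] using hx')
    exact ⟨b, ⟨hb, (aeval_div_gcd_eq_zero_iff_s10 hsep S hx').1 hx⟩, rfl⟩
  · rintro ⟨b, ⟨-, hb⟩, rfl⟩
    have hβb : aeval (β ^ b) (X ^ v - 1 : F[X]) = 0 := by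
      simp [pow_right_comm _ b, hβ.pow_eq_one]
    exact (aeval_div_gcd_eq_zero_iff_s10 hsep S hβb).2 hb

theorem natDegree_X_pow_sub_one_div_gcd [DecidableEq F] {v : ℕ} [NeZero v] {β : K}
    (hβ : IsPrimitiveRoot β v) (S : F[X]) :
    ((X ^ v - 1) / EuclideanDomain.gcd (X ^ v - 1) S).natDegree =
      {b | b < v ∧ aeval (β ^ b) S ≠ 0}.ncard := by
  have hsep := separable_X_pow_sub_one_of_isPrimitiveRoot (F := F) hβ
  have hdvd := EuclideanDomain.div_dvd_of_dvd (EuclideanDomain.gcd_dvd_left (X ^ v - 1) S)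
  have hsplits := (X_pow_sub_one_splits hβ).of_dvd
    (X_pow_sub_C_ne_zero (NeZero.pos v) 1) (Polynomial.map_dvd (algebraMap F K) hdvd |>.trans
      (by simp))
  rw [← card_rootSet_eq_natDegree (hsep.of_dvd hdvd) hsplits, ← Nat.card_eq_fintype_card,
    Nat.card_coe_set_eq, rootSet_X_pow_sub_one_div_gcd hβ]
  exact Set.InjOn.ncard_image fun a ha b hb => hβ.pow_inj ha.1 hb.1

theorem sum_pow_pow_mul_inv_pow_pow {v : ℕ} {α : K} (hα : IsPrimitiveRoot α v) {a b : ℕ}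
    (ha : a < v) (hb : b < v) :
    ∑ t ∈ Finset.range v, (α ^ t) ^ a * (α⁻¹ ^ b) ^ t = if a = b then (v : K) else 0 := by
  have hα0 : α ≠ 0 := hα.ne_zero (by lia)
  have hpow (t : ℕ) : (α ^ t) ^ a * (α⁻¹ ^ b) ^ t = (α ^ a * α⁻¹ ^ b) ^ t := by
    rw [mul_pow, pow_right_comm]
  simp only [hpow]
  split_ifs with hab
  · simp [hab, hα0]
  · have hne : α ^ a * α⁻¹ ^ b ≠ 1 := fun h =>
      hab (hα.pow_inj ha hb ((mul_inv_eq_one₀ (pow_ne_zero b hα0)).1 (inv_pow α b ▸ h)))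
    rw [geom_sum_eq hne, ← hpow, hα.pow_eq_one, pow_right_comm, inv_pow, hα.pow_eq_one]
    simp

theorem aeval_inv_pow_sum_C_mul_X_pow {v : ℕ} {α : K} (hα : IsPrimitiveRoot α v) {A : Finset ℕ}
    (hA : ∀ a ∈ A, a < v) {s : ℕ → F}
    (hs : ∀ t, algebraMap F K (s t) = ∑ a ∈ A, (α ^ t) ^ a) {b : ℕ} (hb : b < v) :
    aeval (α⁻¹ ^ b) (∑ t ∈ Finset.range v, C (s t) * X ^ t) = if b ∈ A then (v : K) else 0 := by
  simp only [map_sum, map_mul, aeval_C, map_pow, aeval_X, hs, Finset.sum_mul]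
  rw [Finset.sum_comm, Finset.sum_congr rfl fun a ha => sum_pow_pow_mul_inv_pow_pow hα (hA a ha) hb,
    Finset.sum_ite_eq']

end LinearSpan

theorem finrank_degreeLT_inf_span_singleton {F : Type*} [Field F] {g : F[X]} (hg : g ≠ 0) (v : ℕ) :
    Module.finrank F ↥(degreeLT F v ⊓ (Ideal.span {g}).restrictScalars F) = v - g.natDegree := by
  have hdeg (q : F[X]) : (g * q).degree < v ↔ q.degree < (v - g.natDegree : ℕ) := by
    rcases eq_or_ne q 0 with rfl | hq
    · simp
    · rw [← natDegree_lt_iff_degree_lt (mul_ne_zero hg hq), ← natDegree_lt_iff_degree_lt hq,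
        natDegree_mul hg hq]
      lia
  have himage : degreeLT F v ⊓ (Ideal.span {g}).restrictScalars F =
      (degreeLT F (v - g.natDegree)).map (LinearMap.mulLeft F g) := by
    ext c
    simp only [Submodule.mem_inf, Submodule.restrictScalars_mem, Ideal.mem_span_singleton,
      Submodule.mem_map, LinearMap.mulLeft_apply, mem_degreeLT]
    constructor
    · rintro ⟨hc, q, rfl⟩
      exact ⟨q, (hdeg q).1 hc, rfl⟩
    · rintro ⟨q, hq, rfl⟩
      exact ⟨(hdeg q).2 hq, q, rfl⟩
  have hinj : Function.Injective (LinearMap.mulLeft F g) := fun _ _ => mul_left_cancel₀ hg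
  rw [himage, ← (Submodule.equivMapOfInjective _ hinj _).finrank_eq,
    (degreeLTEquiv F (v - g.natDegree)).finrank_eq, Module.finrank_fin_fun]

theorem exists_locators {K : Type*} [Field K] [Algebra (ZMod 2) K] {v : ℕ} [NeZero v] {β : K}
    (hβ : IsPrimitiveRoot β v) {c : (ZMod 2)[X]} (hc : c ≠ 0) (hcv : c.degree < v) :
    ∃ s : Finset K, s.Nonempty ∧ 0 ∉ s ∧ #s = #c.support ∧
      ∀ b, ∑ x ∈ s, x ^ b = aeval (β ^ b) c := by
  have hinj : Set.InjOn (β ^ ·) (c.support : Set ℕ) := by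
    have hlt : ∀ t ∈ c.support, t < v := fun t ht =>
      Nat.cast_lt.1 ((le_degree_of_mem_supp t ht).trans_lt hcv)
    exact fun a ha b hb => hβ.pow_inj (hlt a ha) (hlt b hb)
  refine ⟨c.support.image (β ^ ·), (nonempty_support_iff.2 hc).image _, ?_,
    Finset.card_image_of_injOn hinj, fun b => ?_⟩
  · simp [hβ.ne_zero (NeZero.ne v)]
  · rw [Finset.sum_image hinj, aeval_def, eval₂_eq_sum, sum_def]
    refine Finset.sum_congr rfl fun t ht => ?_
    have hone : c.coeff t = 1 := by
      have honly : ∀ z : ZMod 2, z ≠ 0 → z = 1 := by decide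
      exact honly _ (mem_support_iff.1 ht)
    rw [hone, map_one, one_mul, pow_right_comm]

section Leaders

/-- The odd numbers `2 n + 1` with `a ≤ n < b`. -/
def oddIco (a b : ℕ) : Finset ℕ :=
  (Finset.Ico a b).image (2 * · + 1)

theorem injective_two_mul_add_one : Function.Injective (2 * · + 1 : ℕ → ℕ) :=
  fun _ _ h => by simpa using h

theorem card_oddIco (a b : ℕ) : #(oddIco a b) = b - a := by
  rw [oddIco, Finset.card_image_of_injective _ injective_two_mul_add_one, Nat.card_Ico]

theorem mem_oddIco {a b n : ℕ} : n ∈ oddIco a b ↔ ∃ j, (a ≤ j ∧ j < b) ∧ 2 * j + 1 = n := by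
  simp [oddIco]

theorem disjoint_oddIco (a b c : ℕ) : Disjoint (oddIco a b) (oddIco b c) :=
  (Finset.disjoint_image injective_two_mul_add_one).2 (Finset.Ico_disjoint_Ico_consecutive a b c)

theorem sum_Ico_two_mul {M : Type*} [AddCommMonoid M] (g : ℕ → M) {a b : ℕ} (hab : a ≤ b) :
    ∑ n ∈ Finset.Ico (2 * a) (2 * b), g n =
      ∑ n ∈ Finset.Ico a b, g (2 * n) + ∑ n ∈ oddIco a b, g n := by
  rw [oddIco, Finset.sum_image injective_two_mul_add_one.injOn]
  induction b, hab using Nat.le_induction with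
  | base => simp
  | succ b hab ih =>
    rw [mul_add_one, Finset.sum_Ico_succ_top (by lia), Finset.sum_Ico_succ_top (by lia), ih,
      Finset.sum_Ico_succ_top hab, Finset.sum_Ico_succ_top hab]
    abel

/-- The elements of `leaders k` below `2 ^ (k + 2)`. -/
def lowLeaders : ℕ → Finset ℕ
  | 0 => {1, 3}
  | k + 1 => (oddIco 0 (2 ^ (k + 1)) \ lowLeaders k) ∪ oddIco (2 ^ (k + 1)) (2 ^ (k + 1) + 2 ^ k)

/-- The odd exponents `n` such that, for `m = 2 k + 5`, the function `x ↦ Tr (f₄ (x + 1))` on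
`𝔽_{2^m}` is the sum of `Tr 1` and the functions `x ↦ Tr (x ^ n)`. The exponents at least
`2 ^ (k + 2)` fill an interval; those below are described recursively, since passing from `k` to
`k + 1` adds modulo 2 one more copy of each odd exponent below `2 ^ (k + 2)`. -/
def leaders (k : ℕ) : Finset ℕ :=
  lowLeaders k ∪ oddIco (2 ^ (k + 1)) (2 ^ (k + 1) + 2 ^ k)

theorem lowLeaders_subset_oddIco : ∀ k, lowLeaders k ⊆ oddIco 0 (2 ^ (k + 1))
  | 0 => by decide
  | k + 1 => by
    have hpow : 2 ^ (k + 2) = 2 ^ (k + 1) + 2 * 2 ^ k := by ring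
    refine Finset.union_subset (Finset.sdiff_subset.trans (Finset.image_subset_image ?_))
      (Finset.image_subset_image ?_) <;>
    exact Finset.Ico_subset_Ico (by lia) (by lia)

theorem odd_and_lt_of_mem_leaders {k n : ℕ} (hn : n ∈ leaders k) : Odd n ∧ n < 2 ^ (k + 3) := by
  have hpow : 2 ^ (k + 3) = 2 * 2 ^ (k + 1) + 4 * 2 ^ k := by ring
  rcases Finset.mem_union.1 hn with hn | hn
  · obtain ⟨j, hj, rfl⟩ := mem_oddIco.1 (lowLeaders_subset_oddIco k hn)
    exact ⟨odd_two_mul_add_one j, by lia⟩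
  · obtain ⟨j, hj, rfl⟩ := mem_oddIco.1 hn
    exact ⟨odd_two_mul_add_one j, by lia⟩

theorem sum_leaders {M : Type*} [AddCommMonoid M] (g : ℕ → M) (k : ℕ) :
    ∑ n ∈ leaders k, g n =
      ∑ n ∈ lowLeaders k, g n + ∑ n ∈ oddIco (2 ^ (k + 1)) (2 ^ (k + 1) + 2 ^ k), g n :=
  Finset.sum_union ((disjoint_oddIco _ _ _).mono_left (lowLeaders_subset_oddIco k))

theorem sum_lowLeaders_succ {M : Type*} [AddCommGroup M] (g : ℕ → M) (k : ℕ) :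
    ∑ n ∈ lowLeaders (k + 1), g n =
      ∑ n ∈ oddIco 0 (2 ^ (k + 1)), g n - ∑ n ∈ lowLeaders k, g n +
        ∑ n ∈ oddIco (2 ^ (k + 1)) (2 ^ (k + 1) + 2 ^ k), g n := by
  rw [lowLeaders, Finset.sum_union ((disjoint_oddIco _ _ _).mono_left Finset.sdiff_subset),
    Finset.sum_sdiff_eq_sub (lowLeaders_subset_oddIco k)]

theorem card_lowLeaders (k : ℕ) : (#(lowLeaders k) : ℤ) = 2 ^ k + (-1) ^ k := by
  induction k with
  | zero => decide
  | succ k ih =>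
    have hsum := sum_lowLeaders_succ (fun _ => (1 : ℤ)) k
    simp only [Finset.sum_const, nsmul_eq_mul, mul_one, ih, card_oddIco] at hsum
    rw [hsum]
    push_cast [Nat.add_sub_cancel_left, Nat.sub_zero]
    ring

theorem card_leaders (k : ℕ) : (#(leaders k) : ℤ) = 2 ^ (k + 1) + (-1) ^ k := by
  have hsum := sum_leaders (fun _ => (1 : ℤ)) k
  simp only [Finset.sum_const, nsmul_eq_mul, mul_one, card_lowLeaders, card_oddIco] at hsum
  rw [hsum]
  push_cast [Nat.add_sub_cancel_left, Nat.sub_zero]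
  ring

theorem sum_Ico_add_sum_Ico_eq_sum_leaders {R : Type*} [CommRing R] [CharP R 2] {T : ℕ → R}
    (hT : ∀ n, T (2 * n) = T n) (k : ℕ) :
    ∑ n ∈ Finset.Ico 0 (2 ^ (k + 1)), T n +
        ∑ n ∈ Finset.Ico (2 ^ (k + 2)) (2 ^ (k + 2) + 2 ^ (k + 1)), T n =
      T 0 + T 1 + T 3 + ∑ n ∈ leaders k, T n := by
  induction k with
  | zero =>
    have h4 : T 4 = T 1 := (hT 2).trans (hT 1)
    have hlow : ∑ n ∈ Finset.Ico 0 (2 ^ 1), T n = T 0 + T 1 := by simp [Finset.sum_range_succ]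
    have hhigh : ∑ n ∈ Finset.Ico (2 ^ 2) (2 ^ 2 + 2 ^ 1), T n = T 1 + T 5 := by
      simp [Finset.sum_Ico_succ_top, h4]
    have hleaders : ∑ n ∈ leaders 0, T n = T 1 + T 3 + T 5 := by
      simp [show leaders 0 = {1, 3, 5} by decide, add_assoc]
    linear_combination hlow + hhigh - hleaders - T 3 * (CharTwo.two_eq_zero : (2 : R) = 0)
  | succ k ih =>
    have hlow := sum_Ico_two_mul T (Nat.zero_le (2 ^ (k + 1)))
    have hhigh := sum_Ico_two_mul T (Nat.le_add_right (2 ^ (k + 2)) (2 ^ (k + 1)))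
    simp only [hT, mul_zero, mul_add, ← pow_succ'] at hlow hhigh
    rw [hlow, hhigh, sum_leaders, sum_lowLeaders_succ, CharTwo.sub_eq_add]
    rw [sum_leaders] at ih
    linear_combination ih

end Leaders

section Trace

theorem trace_pow_card_pow_s10 {F K : Type*} [Field F] [Fintype F] [Field K] [Algebra F K]
    [Algebra.IsAlgebraic F K] (x : K) (i : ℕ) :
    Algebra.trace F K (x ^ Fintype.card F ^ i) = Algebra.trace F K x := by
  induction i with
  | zero => simp
  | succ i ih =>
    rw [pow_succ, pow_mul, ← ih]
    exact Algebra.trace_eq_of_algEquiv (FiniteField.frobeniusAlgEquivOfAlgebraic F K) _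

theorem add_one_pow_two_pow_sub_one {R : Type*} [CommRing R] [CharP R 2] (x : R) (n : ℕ) :
    (x + 1) ^ (2 ^ n - 1) = ∑ j ∈ Finset.range (2 ^ n), x ^ j := by
  induction n with
  | zero => simp
  | succ n ih =>
    have hexp : 2 ^ (n + 1) - 1 = 2 ^ n + (2 ^ n - 1) := by lia
    rw [hexp, pow_add, ih, add_pow_char_pow, one_pow, pow_succ, mul_two, Finset.sum_range_add]
    simp only [pow_add, ← Finset.mul_sum]
    ring

variable {K : Type*} [Field K] [Finite K] [Algebra (ZMod 2) K]

theorem trace_pow_two_pow (x : K) (i : ℕ) :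
    Algebra.trace (ZMod 2) K (x ^ 2 ^ i) = Algebra.trace (ZMod 2) K x := by
  simpa only [ZMod.card] using trace_pow_card_pow_s10 (F := ZMod 2) x i

theorem pow_two_pow_finrank (x : K) : x ^ 2 ^ Module.finrank (ZMod 2) K = x := by
  have := Fintype.ofFinite K
  have hcard : Fintype.card K = 2 ^ Module.finrank (ZMod 2) K := by
    rw [Module.card_eq_pow_finrank (K := ZMod 2), ZMod.card]
  rw [← hcard, FiniteField.pow_card]

theorem trace_add_one_add_cube [CharP K 2] (x : K) :
    Algebra.trace (ZMod 2) K ((x + 1) + (x + 1) ^ 3) =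
      Algebra.trace (ZMod 2) K x + Algebra.trace (ZMod 2) K (x ^ 3) := by
  have hcube : (x + 1) + (x + 1) ^ 3 = x ^ 2 ^ 1 + x ^ 3 := by
    linear_combination (x ^ 2 + 2 * x + 1) * (CharTwo.two_eq_zero : (2 : K) = 0)
  rw [hcube, map_add, trace_pow_two_pow]

-- Raising to the power `2 ^ (k + 1)`, which preserves the trace, turns the exponent into
-- `2 ^ (k + 2) + (2 ^ (k + 1) - 1)` modulo `2 ^ (2 k + 5) - 1`.
theorem trace_add_one_pow [CharP K 2] {k : ℕ} (hK : Module.finrank (ZMod 2) K = 2 * k + 5) (x : K) :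
    Algebra.trace (ZMod 2) K ((x + 1) ^ (2 ^ (2 * k + 5) - 2 ^ (k + 4) + 2)) =
      ∑ n ∈ Finset.Ico 0 (2 ^ (k + 1)), Algebra.trace (ZMod 2) K (x ^ n) +
        ∑ n ∈ Finset.Ico (2 ^ (k + 2)) (2 ^ (k + 2) + 2 ^ (k + 1)),
          Algebra.trace (ZMod 2) K (x ^ n) := by
  have hexp : (2 ^ (2 * k + 5) - 2 ^ (k + 4) + 2) * 2 ^ (k + 1) =
      2 ^ (k + 2) + 2 ^ (2 * k + 5) * (2 ^ (k + 1) - 1) := by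
    have hle : 2 ^ (k + 4) ≤ 2 ^ (2 * k + 5) := Nat.pow_le_pow_right two_pos (by lia)
    zify [hle, Nat.one_le_two_pow (n := k + 1)]
    ring
  rw [← trace_pow_two_pow _ (k + 1), ← pow_mul, hexp, pow_add, pow_mul, ← hK, pow_two_pow_finrank,
    add_one_pow_two_pow_sub_one, add_pow_char_pow, one_pow, add_mul, one_mul, map_add, add_comm,
    Finset.mul_sum, Finset.sum_Ico_eq_sum_range (m := 2 ^ (k + 2))]
  simp only [map_sum, ← pow_add, add_tsub_cancel_left, Finset.range_eq_Ico]

theorem trace_add_one_eq_one_add_sum_leaders {k : ℕ} (hK : Module.finrank (ZMod 2) K = 2 * k + 5)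
    (x : K) :
    Algebra.trace (ZMod 2) K
        ((x + 1) + (x + 1) ^ 3 + (x + 1) ^ (2 ^ (2 * k + 5) - 2 ^ (k + 4) + 2)) =
      1 + ∑ n ∈ leaders k, Algebra.trace (ZMod 2) K (x ^ n) := by
  have := charP_of_injective_algebraMap (algebraMap (ZMod 2) K).injective 2
  have hone : Algebra.trace (ZMod 2) K (x ^ 0) = 1 := by
    rw [pow_zero, ← map_one (algebraMap (ZMod 2) K), Algebra.trace_algebraMap, hK]
    have hodd : Odd (2 * k + 5) := ⟨k + 2, by ring⟩
    rw [nsmul_one, hodd.natCast_zmod_two]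
  have hdouble (n : ℕ) : Algebra.trace (ZMod 2) K (x ^ (2 * n)) =
      Algebra.trace (ZMod 2) K (x ^ n) := by
    simpa only [mul_comm 2 n, pow_mul, pow_one] using trace_pow_two_pow (x ^ n) 1
  rw [map_add, trace_add_one_add_cube, trace_add_one_pow hK,
    sum_Ico_add_sum_Ico_eq_sum_leaders hdouble, hone, pow_one]
  linear_combination (Algebra.trace (ZMod 2) K x + Algebra.trace (ZMod 2) K (x ^ 3)) *
    (CharTwo.two_eq_zero : (2 : ZMod 2) = 0)

end Trace

section CyclotomicCosets

/-- The union of the 2-cyclotomic cosets modulo `2 ^ m - 1` of the elements of `M`. -/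
def cosetUnion (m : ℕ) (M : Finset ℕ) : Finset ℕ :=
  (M ×ˢ Finset.range m).image fun p => p.1 * 2 ^ p.2 % (2 ^ m - 1)

instance neZero_two_pow_sub_one {m : ℕ} [NeZero m] : NeZero (2 ^ m - 1) :=
  .of_pos (Nat.sub_pos_of_lt (Nat.one_lt_two_pow (NeZero.ne m)))

theorem coprime_two_pow_two_pow_sub_one {m : ℕ} (hm : m ≠ 0) (i : ℕ) :
    (2 ^ m - 1).Coprime (2 ^ i) :=
  (Nat.coprime_two_right.2 (Nat.Even.sub_odd Nat.one_le_two_pow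
    (even_two.pow_of_ne_zero hm) odd_one)).pow_right i

theorem eq_and_eq_zero_of_modEq_mul_two_pow {m h t a b : ℕ} (hodd : Odd a) (ha : a < 2 ^ h)
    (hb : b < 2 ^ h) (hhm : h < m) (ht : h + t ≤ m) (hab : a ≡ b * 2 ^ t [MOD 2 ^ m - 1]) :
    a = b ∧ t = 0 := by
  have hlt : 2 ^ (h + 1) ≤ 2 ^ m := Nat.pow_le_pow_right two_pos hhm
  rcases t.eq_zero_or_pos with rfl | htpos
  · rw [pow_zero, mul_one] at hab
    exact ⟨hab.eq_of_lt_of_lt (by lia) (by lia), rfl⟩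
  · have hbt : b * 2 ^ t < 2 ^ m - 1 := by
      have hmul : (b + 1) * 2 ^ t ≤ 2 ^ h * 2 ^ t := Nat.mul_le_mul_right _ hb
      have hpow : 2 ^ (h + t) ≤ 2 ^ m := Nat.pow_le_pow_right two_pos ht
      have htwo : 2 ^ 1 ≤ 2 ^ t := Nat.pow_le_pow_right two_pos htpos
      lia
    have heven : Even (b * 2 ^ t) := (even_two.pow_of_ne_zero htpos.ne').mul_left b
    rw [hab.eq_of_lt_of_lt (by lia) hbt] at hodd
    exact absurd heven (Nat.not_even_iff_odd.2 hodd)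

theorem eq_and_eq_of_mul_two_pow_modEq {m h i j a b : ℕ} (haodd : Odd a) (hbodd : Odd b)
    (ha : a < 2 ^ h) (hb : b < 2 ^ h) (hhm : h < m) (hm : 2 * h ≤ m + 1) (hij : i ≤ j) (hj : j < m)
    (hab : a * 2 ^ i ≡ b * 2 ^ j [MOD 2 ^ m - 1]) : a = b ∧ i = j := by
  obtain ⟨d, rfl⟩ := Nat.exists_eq_add_of_le hij
  have hcancel : a ≡ b * 2 ^ d [MOD 2 ^ m - 1] := by
    rw [pow_add, mul_left_comm, mul_comm] at hab
    exact Nat.ModEq.cancel_left_of_coprime (coprime_two_pow_two_pow_sub_one (by lia) i) hab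
  by_cases hd : h + d ≤ m
  · have := eq_and_eq_zero_of_modEq_mul_two_pow haodd ha hb hhm hd hcancel
    lia
  · have hone : 2 ^ m ≡ 1 [MOD 2 ^ m - 1] :=
      ((Nat.modEq_iff_dvd' Nat.one_le_two_pow).2 dvd_rfl).symm
    have hwrap : b ≡ a * 2 ^ (m - d) [MOD 2 ^ m - 1] := by
      have hmul := hcancel.mul_right (2 ^ (m - d))
      rw [mul_assoc, ← pow_add, Nat.add_sub_cancel' (by lia)] at hmul
      simpa using (hmul.trans (hone.mul_left b)).symm
    have := eq_and_eq_zero_of_modEq_mul_two_pow hbodd hb ha hhm (by lia) hwrap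
    lia

variable {m h : ℕ} {M : Finset ℕ} (hM : ∀ n ∈ M, Odd n ∧ n < 2 ^ h)

include hM in
theorem injOn_mul_two_pow_mod (hhm : h < m) (hm : 2 * h ≤ m + 1) :
    Set.InjOn (fun p : ℕ × ℕ => p.1 * 2 ^ p.2 % (2 ^ m - 1)) (M ×ˢ Finset.range m : Finset _) := by
  rintro ⟨a, i⟩ hai ⟨b, j⟩ hbj hab
  simp only [Finset.coe_product, Set.mem_prod, Finset.mem_coe, Finset.mem_range] at hai hbj
  obtain ⟨haodd, ha⟩ := hM a hai.1
  obtain ⟨hbodd, hb⟩ := hM b hbj.1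
  rcases le_total i j with hij | hij
  · obtain ⟨rfl, rfl⟩ := eq_and_eq_of_mul_two_pow_modEq haodd hbodd ha hb hhm hm hij hbj.2 hab
    rfl
  · obtain ⟨rfl, rfl⟩ := eq_and_eq_of_mul_two_pow_modEq hbodd haodd hb ha hhm hm hij hai.2 hab.symm
    rfl

include hM in
theorem card_cosetUnion (hhm : h < m) (hm : 2 * h ≤ m + 1) : #(cosetUnion m M) = m * #M := by
  rw [cosetUnion, Finset.card_image_of_injOn (injOn_mul_two_pow_mod hM hhm hm),
    Finset.card_product, Finset.card_range, mul_comm]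

include hM in
theorem zero_notMem_cosetUnion (hhm : h < m) : 0 ∉ cosetUnion m M := by
  simp only [cosetUnion, Finset.mem_image, Finset.mem_product, not_exists, not_and, Prod.forall]
  intro n i hn hmod
  obtain ⟨⟨r, rfl⟩, hlt⟩ := hM n hn.1
  have hdvd := (coprime_two_pow_two_pow_sub_one (by lia) i).dvd_of_dvd_mul_right
    (Nat.dvd_of_mod_eq_zero hmod)
  have hpow : 2 ^ (h + 1) ≤ 2 ^ m := Nat.pow_le_pow_right two_pos hhm
  have := Nat.le_of_dvd (by lia) hdvd
  lia

include hM in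
theorem subset_cosetUnion (hhm : h < m) : M ⊆ cosetUnion m M := by
  intro n hn
  have hpow : 2 ^ (h + 1) ≤ 2 ^ m := Nat.pow_le_pow_right two_pos hhm
  have hlt : n < 2 ^ m - 1 := by
    have := (hM n hn).2
    lia
  exact Finset.mem_image.2 ⟨(n, 0), by simpa [hn] using by lia, by simp [Nat.mod_eq_of_lt hlt]⟩

theorem lt_of_mem_cosetUnion [NeZero m] {a : ℕ} (ha : a ∈ cosetUnion m M) : a < 2 ^ m - 1 := by
  obtain ⟨p, -, rfl⟩ := Finset.mem_image.1 ha
  exact Nat.mod_lt _ (NeZero.pos _)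

include hM in
theorem sum_pow_cosetUnion {K : Type*} [Field K] [Finite K] [Algebra (ZMod 2) K]
    (hK : Module.finrank (ZMod 2) K = m) (hhm : h < m) (hm : 2 * h ≤ m + 1) {x : K}
    (hx : x ^ (2 ^ m - 1) = 1) :
    ∑ a ∈ cosetUnion m M, x ^ a =
      algebraMap (ZMod 2) K (∑ n ∈ M, Algebra.trace (ZMod 2) K (x ^ n)) := by
  rw [cosetUnion, Finset.sum_image (injOn_mul_two_pow_mod hM hhm hm), Finset.sum_product, map_sum]
  refine Finset.sum_congr rfl fun n _ => ?_
  rw [FiniteField.algebraMap_trace_eq_sum_pow, hK, Nat.card_zmod]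
  simp only [← pow_eq_pow_mod _ hx, pow_mul]

end CyclotomicCosets

section Code

variable {m : ℕ} [NeZero m] {α : GaloisField 2 m} {f : GaloisField 2 m → GaloisField 2 m}

theorem genPoly_ne_zero (hα : IsPrimitiveRoot α (2 ^ m - 1)) : genPoly m α f ≠ 0 :=
  ne_zero_of_dvd_ne_zero (separable_X_pow_sub_one_of_isPrimitiveRoot hα).ne_zero
    (EuclideanDomain.div_dvd_of_dvd (EuclideanDomain.gcd_dvd_left _ _))

theorem genPoly_mem_codeC (hα : IsPrimitiveRoot α (2 ^ m - 1))
    (hdeg : (genPoly m α f).natDegree < 2 ^ m - 1) : genPoly m α f ∈ codeC m α f :=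
  ⟨mem_degreeLT.2 ((natDegree_lt_iff_degree_lt (genPoly_ne_zero hα)).1 hdeg),
    Ideal.mem_span_singleton_self _⟩

variable (hα : IsPrimitiveRoot α (2 ^ m - 1)) {A : Finset ℕ} (hA : ∀ a ∈ A, a < 2 ^ m - 1)
  (hf : ∀ t, algebraMap (ZMod 2) (GaloisField 2 m)
    (Algebra.trace (ZMod 2) (GaloisField 2 m) (f (α ^ t + 1))) = ∑ a ∈ A, (α ^ t) ^ a)

include hα hA hf

theorem aeval_inv_pow_traceSeqPoly_ne_zero_iff {b : ℕ} (hb : b < 2 ^ m - 1) :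
    aeval (α⁻¹ ^ b) (traceSeqPoly m α f) ≠ 0 ↔ b ∈ A := by
  rw [traceSeqPoly, aeval_inv_pow_sum_C_mul_X_pow hα hA hf hb]
  exact hα.neZero'.ne.ite_ne_right_iff

theorem natDegree_genPoly : (genPoly m α f).natDegree = #A := by
  have hset : {b | b < 2 ^ m - 1 ∧ aeval (α⁻¹ ^ b) (traceSeqPoly m α f) ≠ 0} = A := by
    ext b
    exact ⟨fun hb => (aeval_inv_pow_traceSeqPoly_ne_zero_iff hα hA hf hb.1).1 hb.2, fun hb =>
      ⟨hA b hb, (aeval_inv_pow_traceSeqPoly_ne_zero_iff hα hA hf (hA b hb)).2 hb⟩⟩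
  rw [genPoly, natDegree_X_pow_sub_one_div_gcd hα.inv, hset, Set.ncard_coe_finset]

theorem aeval_inv_pow_eq_zero_of_mem_codeC {c : (ZMod 2)[X]} (hc : c ∈ codeC m α f) {b : ℕ}
    (hb : b ∈ A) : aeval (α⁻¹ ^ b) c = 0 := by
  have hdvd : genPoly m α f ∣ c := Ideal.mem_span_singleton.1 hc.2
  have hroot : aeval (α⁻¹ ^ b) (X ^ (2 ^ m - 1) - 1 : (ZMod 2)[X]) = 0 := by
    simp [pow_right_comm _ b, hα.pow_eq_one]
  refine aeval_eq_zero_of_dvd_aeval_eq_zero hdvd ?_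
  exact (aeval_div_gcd_eq_zero_iff_s10 (separable_X_pow_sub_one_of_isPrimitiveRoot hα) _ hroot).2
    ((aeval_inv_pow_traceSeqPoly_ne_zero_iff hα hA hf (hA b hb)).2 hb)

theorem exists_locators_of_mem_codeC {c : (ZMod 2)[X]} (hc : c ∈ codeC m α f) (hc0 : c ≠ 0) :
    ∃ s : Finset (GaloisField 2 m), s.Nonempty ∧ 0 ∉ s ∧ #s = #c.support ∧
      ∀ b ∈ A, ∑ x ∈ s, x ^ b = 0 := by
  obtain ⟨s, hs, h0, hcard, hsum⟩ := exists_locators hα.inv hc0 (mem_degreeLT.1 hc.1)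
  exact ⟨s, hs, h0, hcard, fun b hb =>
    (hsum b).trans (aeval_inv_pow_eq_zero_of_mem_codeC hα hA hf hc hb)⟩

end Code

section WeightBounds

variable {K : Type*} [Field K] [CharP K 2] {s : Finset K} {k : ℕ} (hs : s.Nonempty) (h0 : 0 ∉ s)
  (hp0 : ∑ x ∈ s, x ^ 0 = 0) (hp : ∀ n ∈ leaders k, ∑ x ∈ s, x ^ n = 0)

include hs h0 hp0 hp

theorem two_pow_add_two_le_card_of_sum_pow_leaders : 2 ^ k + 2 ≤ #s := by
  rcases k with - | k
  · have := eight_le_card_of_sum_pow_one_three_five hs h0 hp0 (hp 1 (by decide))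
      (hp 3 (by decide)) (hp 5 (by decide))
    lia
  · have hmem (i : ℕ) (hi : i < 2 ^ (k + 1)) : 2 ^ (k + 3) + 1 + 2 * i ∈ leaders (k + 1) :=
      Finset.mem_union_right _ (mem_oddIco.2 ⟨2 ^ (k + 2) + i, by lia, by ring⟩)
    have hlt : 2 ^ (k + 1) < #s := lt_card_of_sum_pow_eq_zero hs h0
      (fun x _ y _ hxy => frobenius_inj K 2 hxy) fun i hi => hp _ (hmem i hi)
    obtain ⟨r, hr⟩ := even_card_of_sum_pow_zero_eq_zero hp0
    lia

theorem eight_le_card_of_sum_pow_leaders (hk : Even k) : 8 ≤ #s := by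
  obtain ⟨r, rfl⟩ := hk
  rcases r with - | - | r
  · exact eight_le_card_of_sum_pow_one_three_five hs h0 hp0 (hp 1 (by decide)) (hp 3 (by decide))
      (hp 5 (by decide))
  · exact eight_le_card_of_sum_pow_one_three_seven_nine_eleven hs h0 hp0 (hp 1 (by decide))
      (hp 3 (by decide)) (hp 7 (by decide)) (hp 9 (by decide)) (hp 11 (by decide))
  · have hle := two_pow_add_two_le_card_of_sum_pow_leaders hs h0 hp0 hp
    have hpow : 2 ^ 4 ≤ 2 ^ (r + 1 + 1 + (r + 1 + 1)) := Nat.pow_le_pow_right two_pos (by lia)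
    lia

end WeightBounds

section MinimumDistance

/-- The exponents `b` for which, when `m = 2 k + 5`, the element `α⁻¹ ^ b` is a root of the
generator polynomial defined by `f₄`. -/
def rootExponents (k : ℕ) : Finset ℕ :=
  insert 0 (cosetUnion (2 * k + 5) (leaders k))

theorem lt_of_mem_rootExponents {k a : ℕ} (ha : a ∈ rootExponents k) : a < 2 ^ (2 * k + 5) - 1 := by
  rcases Finset.mem_insert.1 ha with rfl | ha
  · exact NeZero.pos _
  · exact lt_of_mem_cosetUnion ha

theorem leaders_subset_rootExponents (k : ℕ) : leaders k ⊆ rootExponents k :=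
  (subset_cosetUnion (fun _ => odd_and_lt_of_mem_leaders) (by lia)).trans (Finset.subset_insert _ _)

theorem card_rootExponents (k : ℕ) : #(rootExponents k) = 1 + (2 * k + 5) * #(leaders k) := by
  rw [rootExponents, Finset.card_insert_of_notMem
    (zero_notMem_cosetUnion (fun _ => odd_and_lt_of_mem_leaders) (by lia)),
    card_cosetUnion (fun _ => odd_and_lt_of_mem_leaders) (by lia) (by lia), add_comm]

theorem odd_card_leaders (k : ℕ) : Odd #(leaders k) := by
  rw [← Int.odd_coe_nat, card_leaders]
  exact (even_two.pow_of_ne_zero k.succ_ne_zero).add_odd (Odd.neg odd_one).pow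

theorem even_card_rootExponents (k : ℕ) : Even #(rootExponents k) := by
  have hodd : Odd (2 * k + 5) := ⟨k + 2, by ring⟩
  rw [card_rootExponents]
  exact odd_one.add_odd (hodd.mul (odd_card_leaders k))

theorem card_rootExponents_lt (k : ℕ) : #(rootExponents k) < 2 ^ (2 * k + 5) - 1 := by
  have hcard : #(leaders k) ≤ 2 * 2 ^ k + 1 := by
    have hsign : (-1 : ℤ) ^ k ≤ 1 := by rcases neg_one_pow_eq_or ℤ k with h | h <;> simp [h]
    zify
    linarith [card_leaders k, pow_succ' (2 : ℤ) k]
  have hk : k < 2 ^ k := Nat.lt_two_pow_self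
  have hpow : 2 ^ (2 * k + 5) = 32 * 2 ^ k * 2 ^ k := by ring
  rw [card_rootExponents, hpow, Nat.lt_sub_iff_add_lt]
  nlinarith

theorem sum_pow_rootExponents {K : Type*} [Field K] [Finite K] [Algebra (ZMod 2) K] {k : ℕ}
    (hK : Module.finrank (ZMod 2) K = 2 * k + 5) {x : K} (hx : x ^ (2 ^ (2 * k + 5) - 1) = 1) :
    ∑ a ∈ rootExponents k, x ^ a = algebraMap (ZMod 2) K (Algebra.trace (ZMod 2) K
      ((x + 1) + (x + 1) ^ 3 + (x + 1) ^ (2 ^ (2 * k + 5) - 2 ^ (k + 4) + 2))) := by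
  have hleaders : ∀ n ∈ leaders k, Odd n ∧ n < 2 ^ (k + 3) := fun _ => odd_and_lt_of_mem_leaders
  rw [rootExponents, Finset.sum_insert (zero_notMem_cosetUnion hleaders (by lia)),
    sum_pow_cosetUnion hleaders hK (by lia) (by lia) hx, trace_add_one_eq_one_add_sum_leaders hK,
    map_add, map_one, pow_zero]

variable {k : ℕ} {α : GaloisField 2 (2 * k + 5)}
  {f : GaloisField 2 (2 * k + 5) → GaloisField 2 (2 * k + 5)}
  (hα : IsPrimitiveRoot α (2 ^ (2 * k + 5) - 1))
  (hf : ∀ x, f x = x + x ^ 3 + x ^ (2 ^ (2 * k + 5) - 2 ^ (k + 4) + 2))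

include hα hf

theorem algebraMap_trace_eq_sum_rootExponents (t : ℕ) :
    algebraMap (ZMod 2) (GaloisField 2 (2 * k + 5))
      (Algebra.trace (ZMod 2) (GaloisField 2 (2 * k + 5)) (f (α ^ t + 1))) =
      ∑ a ∈ rootExponents k, (α ^ t) ^ a := by
  rw [hf, sum_pow_rootExponents (GaloisField.finrank 2 (by lia))]
  rw [pow_right_comm, hα.pow_eq_one, one_pow]

theorem natDegree_genPoly_eq_card_rootExponents :
    (genPoly (2 * k + 5) α f).natDegree = #(rootExponents k) := by
  exact natDegree_genPoly hα (fun _ => lt_of_mem_rootExponents)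
    (algebraMap_trace_eq_sum_rootExponents hα hf)

theorem weight_bounds_of_mem_codeC {c : (ZMod 2)[X]} (hc : c ∈ codeC (2 * k + 5) α f)
    (hc0 : c ≠ 0) :
    Even #c.support ∧ 2 ^ k + 2 ≤ #c.support ∧ (Even k → 8 ≤ #c.support) := by
  obtain ⟨s, hs, h0, hcard, hsum⟩ := exists_locators_of_mem_codeC hα
    (fun _ => lt_of_mem_rootExponents) (algebraMap_trace_eq_sum_rootExponents hα hf) hc hc0
  have hp0 := hsum 0 (Finset.mem_insert_self _ _)
  have hp : ∀ n ∈ leaders k, ∑ x ∈ s, x ^ n = 0 := fun n hn =>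
    hsum n (leaders_subset_rootExponents k hn)
  rw [← hcard]
  exact ⟨even_card_of_sum_pow_zero_eq_zero hp0,
    two_pow_add_two_le_card_of_sum_pow_leaders hs h0 hp0 hp,
    eight_le_card_of_sum_pow_leaders hs h0 hp0 hp⟩

theorem exists_isLeast_wtSet_codeC :
    ∃ d, IsLeast (wtSet (codeC (2 * k + 5) α f)) d ∧ 2 ^ k + 2 ≤ d ∧ (Even k → 8 ≤ d) ∧
      d ≤ (genPoly (2 * k + 5) α f).natDegree := by
  have hdeg := natDegree_genPoly_eq_card_rootExponents hα hf
  have hgen0 := genPoly_ne_zero (f := f) hα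
  have hgen := genPoly_mem_codeC hα (hdeg.trans_lt (card_rootExponents_lt k))
  have hleast : IsLeast (wtSet (codeC (2 * k + 5) α f)) (sInf (wtSet (codeC (2 * k + 5) α f))) :=
    ⟨Nat.sInf_mem ⟨_, _, hgen, hgen0, rfl⟩, fun _ => Nat.sInf_le⟩
  obtain ⟨c, hc, hc0, hweight⟩ := hleast.1
  obtain ⟨-, hlower, height⟩ := weight_bounds_of_mem_codeC hα hf hc hc0
  obtain ⟨hgenEven, -, -⟩ := weight_bounds_of_mem_codeC hα hf hgen hgen0
  have hle := hleast.2 ⟨_, hgen, hgen0, rfl⟩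
  refine ⟨_, hleast, hweight ▸ hlower, hweight ▸ height, hle.trans ?_⟩
  have hcard := card_supp_le_succ_natDegree (genPoly (2 * k + 5) α f)
  have hdegEven := even_card_rootExponents k
  rw [← hdeg] at hdegEven
  grind

end MinimumDistance

/-- Theorem 4: for f₄(x) = x + x^3 + x^{2^m − 2^{(m+3)/2} + 2} over 𝔽_{2^m},
m ≥ 5 odd, the code C_s has length 2^m − 1 and dimension 2^m − 1 − L_s, where
L_s = 1 + m(2^{(m−3)/2} + 1) if m ≡ 1 (mod 4) and
L_s = 1 + m(2^{(m−3)/2} − 1) if m ≡ 3 (mod 4); moreover, if m ≡ 1 (mod 4) then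
max{8, 2^{(m−5)/2} + 2} ≤ d(C_s) ≤ 1 + m(2^{(m−3)/2} + 1), and if
m ≡ 3 (mod 4) then 2^{(m−5)/2} + 2 ≤ d(C_s) ≤ 1 + m(2^{(m−3)/2} − 1). -/
theorem stmt10 (m : ℕ) (hm5 : 5 ≤ m) (hmo : Odd m)
    (α : GaloisField 2 m) (hα : orderOf α = 2 ^ m - 1)
    (f : GaloisField 2 m → GaloisField 2 m)
    (hf : ∀ x, f x = x + x ^ 3 + x ^ (2 ^ m - 2 ^ ((m + 3) / 2) + 2)) :
    Module.finrank (ZMod 2) ↥(codeC m α f) =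
      2 ^ m - 1 - (genPoly m α f).natDegree ∧
    (m % 4 = 1 →
      (genPoly m α f).natDegree = 1 + m * (2 ^ ((m - 3) / 2) + 1) ∧
      ∃ d : ℕ, IsLeast (wtSet (codeC m α f)) d ∧
        max 8 (2 ^ ((m - 5) / 2) + 2) ≤ d ∧
        d ≤ 1 + m * (2 ^ ((m - 3) / 2) + 1)) ∧
    (m % 4 = 3 →
      (genPoly m α f).natDegree = 1 + m * (2 ^ ((m - 3) / 2) - 1) ∧
      ∃ d : ℕ, IsLeast (wtSet (codeC m α f)) d ∧
        2 ^ ((m - 5) / 2) + 2 ≤ d ∧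
        d ≤ 1 + m * (2 ^ ((m - 3) / 2) - 1)) := by
  obtain ⟨k, rfl⟩ : ∃ k, m = 2 * k + 5 := by
    obtain ⟨j, rfl⟩ := hmo
    exact ⟨j - 2, by lia⟩
  have hα' := IsPrimitiveRoot.iff_orderOf.2 hα
  rw [show (2 * k + 5 + 3) / 2 = k + 4 by lia] at hf
  rw [show (2 * k + 5 - 3) / 2 = k + 1 by lia, show (2 * k + 5 - 5) / 2 = k by lia]
  have hcard := card_leaders k
  have hdeg := (natDegree_genPoly_eq_card_rootExponents hα' hf).trans (card_rootExponents k)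
  obtain ⟨d, hd, hlower, height, hupper⟩ := exists_isLeast_wtSet_codeC hα' hf
  refine ⟨finrank_degreeLT_inf_span_singleton (ne_zero_of_natDegree_gt (n := 0) (by lia)) _,
    fun hmod => ?_, fun hmod => ?_⟩
  · have hk : Even k := Nat.even_iff.2 (by lia)
    have hleaders : #(leaders k) = 2 ^ (k + 1) + 1 := by zify; rw [hcard, hk.neg_one_pow]
    rw [hleaders] at hdeg
    exact ⟨hdeg, d, hd, max_le (height hk) hlower, hdeg ▸ hupper⟩
  · have hk : Odd k := Nat.odd_iff.2 (by lia)
    have hleaders : #(leaders k) = 2 ^ (k + 1) - 1 := by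
      zify [Nat.one_le_two_pow (n := k + 1)]
      rw [hcard, hk.neg_one_pow, sub_eq_add_neg]
    rw [hleaders] at hdeg
    exact ⟨hdeg, d, hd, hlower, hdeg ▸ hupper⟩
end
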